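/- Let 𝓛 be a quite full lamination system admitting a rainbow point, and let g ∈ Aut(𝓛). If g is elliptic (nontrivial of finite order), then there is an ideal polygon 𝒢 of 𝓛 preserved by g, and the order of g divides the number of elements of 𝒢. -/

import Mathlib

/-!
The proof builds an invariant gap directly. Let `H` be the cyclic group generated by the elliptic
automorphism. An order preserving permutation of finite order with a fixed point is trivial
(`FinAct.eq_one_of_fixed`), so `H` acts freely on the circle, and hence on good intervals. Call
an element of the lamination *wandering* if it is disjoint from all its nontrivial `H`-translates.

* Every leaf has a wandering side (`FinAct.wandering_or_dual`), and two wandering elements that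
  meet are nested (`FinAct.wandering_nested`). Both follow from unlinkedness, together with the
  fact that an interval is never contained in a nontrivial translate of itself.
* Every wandering element lies in a maximal one (`FinAct.exists_max`), by closedness of the
  lamination: the union of an ascending chain of wandering elements still misses a translate, so
  it is a good interval.

Hence the maximal wandering elements form an `H`-invariant gap. It is not a crown, because the
pivot would be a fixed point (`FinAct.not_isCrown`), so it is an ideal polygon by quite fullness.
Finally `H` acts freely on it, so its order divides the number of elements
(`FinAct.card_dvd_ncard`).
-/

open Set Filter Topology

namespace Veering

/-- The circle `S¹`: the unit additive circle `ℝ / ℤ`, with its standard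
circular order (`sbtw x y z` means the triple `(x,y,z)` is counterclockwise)
and its standard topology. -/
abbrev S1 : Type := UnitAddCircle

/-- A good open interval in `S¹`, recorded by its ordered pair of distinct
endpoints; its carrier is the set of points strictly counterclockwise
between them. -/
structure GoodInt : Type where
  a : S1
  b : S1
  ne : a ≠ b

namespace GoodInt

/-- The set of points of the good open interval `(a, b)`. -/
def carrier (I : GoodInt) : Set S1 := {z : S1 | sbtw I.a z I.b}

/-- The dual good interval `(u,v)* = (v,u)`. -/
def dual (I : GoodInt) : GoodInt := ⟨I.b, I.a, I.ne.symm⟩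

/-- The vertex set `v(ℓ(I)) = {a, b}` of the leaf determined by `I`. -/
def verts (I : GoodInt) : Set S1 := {I.a, I.b}

end GoodInt

/-- `I` and `J` represent the same leaf `ℓ(I) = {I, I*}`. -/
def SameLeaf (I J : GoodInt) : Prop := J = I ∨ J = I.dual

/-- A lamination system: a nonempty collection of good open intervals, closed
under duals, pairwise unlinked, and closed under unions of ascending chains
(when these unions are good intervals). -/
structure LamSys : Type where
  mem : Set GoodInt
  nonempty : mem.Nonempty
  dual_mem : ∀ I ∈ mem, GoodInt.dual I ∈ mem
  unlinked : ∀ I ∈ mem, ∀ J ∈ mem,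
      I.carrier ⊆ J.carrier ∨ I.dual.carrier ⊆ J.carrier ∨
      I.carrier ⊆ J.dual.carrier ∨ I.dual.carrier ⊆ J.dual.carrier
  chain_closed : ∀ c : ℕ → GoodInt, (∀ n, c n ∈ mem) →
      (∀ n, (c n).carrier ⊆ (c (n + 1)).carrier) →
      ∀ J : GoodInt, J.carrier = ⋃ n, (c n).carrier → J ∈ mem

namespace LamSys

/-- The endpoint set `E(𝓛)`: the union of the vertex sets of all leaves. -/
def E (L : LamSys) : Set S1 := ⋃ I ∈ L.mem, I.verts

/-- A gap of `L`: a set of pairwise disjoint elements of `L` such that every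
leaf of `L` lies on one of them. -/
def IsGap (L : LamSys) (G : Set GoodInt) : Prop :=
  G ⊆ L.mem ∧
  (∀ I ∈ G, ∀ J ∈ G, I ≠ J → Disjoint I.carrier J.carrier) ∧
  (∀ I ∈ L.mem, ∃ J ∈ G, I.carrier ⊆ J.carrier ∨ I.dual.carrier ⊆ J.carrier)

end LamSys

/-- The vertex set `v(𝒢) = S¹ \ ⋃ 𝒢` of a gap. -/
def gapVerts (G : Set GoodInt) : Set S1 := (⋃ I ∈ G, I.carrier)ᶜ

/-- `t` is a tip of `G`: an isolated point of the vertex set of `G`. -/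
def IsTipOf (t : S1) (G : Set GoodInt) : Prop :=
  t ∈ gapVerts G ∧ t ∉ closure (gapVerts G \ {t})

/-- A gap that is itself a leaf `{I, I*}`. -/
def IsLeafGap (G : Set GoodInt) : Prop := ∃ I : GoodInt, G = {I, I.dual}

/-- `G` is a crown with tip sequence `t : ℤ → S¹` and pivot `p`. -/
def IsCrownWith (G : Set GoodInt) (t : ℤ → S1) (p : S1) : Prop :=
  (∀ k, p ≠ t k) ∧ (∀ k, t k ≠ t (k + 1)) ∧
  G = {I : GoodInt | ∃ k : ℤ, I.a = t k ∧ I.b = t (k + 1)} ∧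
  gapVerts G = Set.range t ∪ {p}

/-- `G` is a crown. -/
def IsCrown (G : Set GoodInt) : Prop := ∃ t p, IsCrownWith G t p

/-- `p` is the pivot of the crown `G`. -/
def IsPivotOf (p : S1) (G : Set GoodInt) : Prop := ∃ t, IsCrownWith G t p

/-- A lamination system is quite full if every gap is an ideal polygon
(finitely many vertices) or a crown. -/
def LamSys.QuiteFull (L : LamSys) : Prop :=
  ∀ G : Set GoodInt, L.IsGap G → (gapVerts G).Finite ∨ IsCrown G

/-- `p` is a rainbow point of `L`: there is a strictly descending sequence of
elements of `L` whose intersection is `{p}`. -/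
def LamSys.IsRainbowPt (L : LamSys) (p : S1) : Prop :=
  ∃ I : ℕ → GoodInt, (∀ n, I n ∈ L.mem) ∧
    (∀ n, (I (n + 1)).carrier ⊂ (I n).carrier) ∧ (⋂ n, (I n).carrier) = {p}

/-- `L` is loose: distinct non-leaf gaps have disjoint vertex sets. -/
def LamSys.Loose (L : LamSys) : Prop :=
  ∀ G H : Set GoodInt, L.IsGap G → L.IsGap H → ¬ IsLeafGap G → ¬ IsLeafGap H →
    G ≠ H → Disjoint (gapVerts G) (gapVerts H)

/-- The sequence of leaves represented by `c` converges to the good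
interval `J`. -/
def SeqConv (c : ℕ → GoodInt) (J : GoodInt) : Prop :=
  ∃ d : ℕ → GoodInt, (∀ n, SameLeaf (c n) (d n)) ∧
    J.carrier ⊆ Filter.liminf (fun n => (d n).carrier) Filter.atTop ∧
    Filter.limsup (fun n => (d n).carrier) Filter.atTop ⊆ closure J.carrier

/-- `I ∈ L` admits an `I`-side sequence: a sequence of leaves of `L`, each
distinct from `ℓ(I)` and lying on `I`, converging to `I`.  (`I` is isolated
precisely when this fails.) -/
def LamSys.HasSideSeq (L : LamSys) (I : GoodInt) : Prop :=
  ∃ c : ℕ → GoodInt, (∀ n, c n ∈ L.mem) ∧ (∀ n, ¬ SameLeaf I (c n)) ∧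
    (∀ n, (c n).carrier ⊆ I.carrier ∨ (c n).dual.carrier ⊆ I.carrier) ∧
    SeqConv c I

/-- `L` is totally disconnected: every distinct pair is separated by a
non-leaf gap. -/
def LamSys.TotDisc (L : LamSys) : Prop :=
  ∀ I ∈ L.mem, ∀ J ∈ L.mem, I.carrier ⊂ J.dual.carrier →
    ∃ G : Set GoodInt, L.IsGap G ∧ ¬ IsLeafGap G ∧
      ∃ M ∈ G, ∃ N ∈ G, I.carrier ⊆ M.carrier ∧ J.carrier ⊆ N.carrier

/-- Gaps `G1` and `G2` interleave: every element of each contains exactly one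
vertex of the other. -/
def Interleave (G1 G2 : Set GoodInt) : Prop :=
  (∀ I ∈ G1, ∃! x : S1, x ∈ I.carrier ∩ gapVerts G2) ∧
  (∀ I ∈ G2, ∃! x : S1, x ∈ I.carrier ∩ gapVerts G1)

/-- A pseudo-fibered pair: two quite full, loose, strongly transverse
lamination systems. -/
structure PseudoFibered (L1 L2 : LamSys) : Prop where
  qf1 : L1.QuiteFull
  qf2 : L2.QuiteFull
  loose1 : L1.Loose
  loose2 : L2.Loose
  transverse : L1.E ∩ L2.E = ∅

/-- A veering pair: a pseudo-fibered pair in which every non-leaf gap of one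
system admits an interleaving gap in the other. -/
structure VeeringPair (L1 L2 : LamSys) extends PseudoFibered L1 L2 : Prop where
  inter1 : ∀ G : Set GoodInt, L1.IsGap G → ¬ IsLeafGap G →
    ∃ H : Set GoodInt, L2.IsGap H ∧ Interleave G H
  inter2 : ∀ G : Set GoodInt, L2.IsGap G → ¬ IsLeafGap G →
    ∃ H : Set GoodInt, L1.IsGap H ∧ Interleave G H

/-- An orientation-preserving homeomorphism of the circle: a bijection of
`S¹` which together with its inverse is continuous, and which preserves the
counterclockwise circular order. -/
def PosHomeo (g : Equiv.Perm S1) : Prop :=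
  Continuous ⇑g ∧ Continuous ⇑g.symm ∧
  ∀ x y z : S1, sbtw x y z → sbtw (g x) (g y) (g z)

/-- `g ∈ Aut(𝓛)`: an orientation-preserving homeomorphism of `S¹` mapping each
element of `𝓛` to an element of `𝓛`. -/
def LamSys.InAut (L : LamSys) (g : Equiv.Perm S1) : Prop :=
  PosHomeo g ∧ ∀ I ∈ L.mem, ∃ J ∈ L.mem, J.carrier = ⇑g '' I.carrier

/-- `g` maps the gap `G` onto itself. -/
def MapsGapOnto (g : Equiv.Perm S1) (G : Set GoodInt) : Prop :=
  (∀ I ∈ G, ∃ J ∈ G, J.carrier = ⇑g '' I.carrier) ∧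
  (∀ J ∈ G, ∃ I ∈ G, J.carrier = ⇑g '' I.carrier)

/-- The fixed point set of `g` on `S¹`. -/
def FixSet (g : Equiv.Perm S1) : Set S1 := {x : S1 | g x = x}

/-- The set of periodic points of `g` on `S¹`. -/
def PerSet (g : Equiv.Perm S1) : Set S1 := {x : S1 | ∃ n : ℕ, 0 < n ∧ (g ^ n) x = x}

/-- `p` is an attracting fixed point of `g`. -/
def IsAttractingFix (g : Equiv.Perm S1) (p : S1) : Prop :=
  g p = p ∧ ∃ I : GoodInt, I.carrier ∩ FixSet g = {p} ∧
    ⇑g '' closure I.carrier ⊆ I.carrier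

/-- `p` is a repelling fixed point of `g`. -/
def IsRepellingFix (g : Equiv.Perm S1) (p : S1) : Prop :=
  g p = p ∧ ∃ I : GoodInt, I.carrier ∩ FixSet g = {p} ∧
    I.carrier ⊆ ⇑g '' closure I.carrier

/-- `g` is elliptic: nontrivial of finite order. -/
def Elliptic (g : Equiv.Perm S1) : Prop := g ≠ 1 ∧ IsOfFinOrder g

/-- `g` is parabolic: it has exactly one fixed point. -/
def Parabolic (g : Equiv.Perm S1) : Prop := ∃! x : S1, g x = x

/-- `g` is hyperbolic: exactly two fixed points, one attracting and one
repelling. -/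
def Hyperbolic (g : Equiv.Perm S1) : Prop :=
  ∃ a b : S1, a ≠ b ∧ FixSet g = {a, b} ∧ IsAttractingFix g a ∧ IsRepellingFix g b

/-- `g` is pseudo-Anosov-like for the pair `(L1, L2)`: nontrivial, neither
elliptic nor parabolic, and preserving both gaps of some interleaving pair. -/
def PAlike (L1 L2 : LamSys) (g : Equiv.Perm S1) : Prop :=
  g ≠ 1 ∧ ¬ Elliptic g ∧ ¬ Parabolic g ∧
  ∃ G1 G2 : Set GoodInt, L1.IsGap G1 ∧ L2.IsGap G2 ∧ Interleave G1 G2 ∧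
    MapsGapOnto g G1 ∧ MapsGapOnto g G2

/-- `g` is properly pseudo-Anosov: pA-like with nonempty fixed point set. -/
def ProperlyPA (L1 L2 : LamSys) (g : Equiv.Perm S1) : Prop :=
  PAlike L1 L2 g ∧ (FixSet g).Nonempty

/-- Two leaves are linked: each of the two complementary components of the
vertex set of one contains a vertex of the other. -/
def LeavesLinked (I J : GoodInt) : Prop :=
  (I.carrier ∩ J.verts).Nonempty ∧ (I.dual.carrier ∩ J.verts).Nonempty

/-- Two gaps are linked: they contain a linked pair of boundary leaves. -/
def GapsLinked (G1 G2 : Set GoodInt) : Prop :=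
  ∃ I1 ∈ G1, ∃ I2 ∈ G2, LeavesLinked I1 I2

/-- Gaps `G1`, `G2` cross: there are distinct pairs `{I₁, J₁} ⊆ G1`,
`{I₂, J₂} ⊆ G2` such that for each `i`, the vertex set of the other gap is
contained in `Iᵢ ∪ Jᵢ` and meets `Iᵢ` in exactly one point. -/
def GapsCross (G1 G2 : Set GoodInt) : Prop :=
  ∃ I1 ∈ G1, ∃ J1 ∈ G1, ∃ I2 ∈ G2, ∃ J2 ∈ G2,
    I1.carrier ⊂ J1.dual.carrier ∧ I2.carrier ⊂ J2.dual.carrier ∧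
    gapVerts G2 ⊆ I1.carrier ∪ J1.carrier ∧
    (∃! x : S1, x ∈ I1.carrier ∩ gapVerts G2) ∧
    gapVerts G1 ⊆ I2.carrier ∪ J2.carrier ∧
    (∃! x : S1, x ∈ I2.carrier ∩ gapVerts G1)

/-- The Baumslag–Solitar group `BS(m,n) = ⟨a, b | b aᵐ b⁻¹ = aⁿ⟩`,
with `a = FreeGroup.of false` and `b = FreeGroup.of true`. -/
abbrev BSGroup (m n : ℤ) : Type :=
  PresentedGroup
    ({FreeGroup.of true * FreeGroup.of false ^ m * (FreeGroup.of true)⁻¹ *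
        (FreeGroup.of false ^ n)⁻¹} : Set (FreeGroup Bool))

/-! ### Coordinates on the circle -/

/-- The coordinate of a point of the circle in the fundamental domain `[r, r + 1)`. -/
noncomputable def coord (r : ℝ) (x : S1) : ℝ := (AddCircle.equivIco (1 : ℝ) r x : ℝ)

lemma coord_mem (r : ℝ) (x : S1) : r ≤ coord r x ∧ coord r x < r + 1 :=
  (AddCircle.equivIco (1 : ℝ) r x).2

lemma coe_coord (r : ℝ) (x : S1) : ((coord r x : ℝ) : S1) = x :=
  AddCircle.coe_equivIco

lemma coord_inj {r : ℝ} {x y : S1} (h : coord r x = coord r y) : x = y := by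
  rw [← coe_coord r x, h, coe_coord]

lemma coord_coe {r u : ℝ} (h1 : r ≤ u) (h2 : u < r + 1) : coord r (u : S1) = u := by
  unfold coord
  rw [AddCircle.equivIco_coe_eq (p := (1 : ℝ)) (a := r) (x := u) ⟨h1, h2⟩]

/-- In any coordinate the circular order is the cyclic order of the reals; this reduces
statements about the circular order to linear arithmetic. -/
lemma sbtw_coord (r : ℝ) (x y z : S1) : sbtw x y z ↔
    (coord r x < coord r y ∧ coord r y < coord r z) ∨
    (coord r y < coord r z ∧ coord r z < coord r x) ∨
    (coord r z < coord r x ∧ coord r x < coord r y) := by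
  obtain ⟨hx1, hx2⟩ := coord_mem r x
  obtain ⟨hy1, hy2⟩ := coord_mem r y
  obtain ⟨hz1, hz2⟩ := coord_mem r z
  rw [sbtw_iff_not_btw]
  have hb : btw z y x ↔ btw ((coord r z : ℝ) : S1) ((coord r y : ℝ) : S1)
      ((coord r x : ℝ) : S1) := by simp only [coe_coord]
  rw [hb, QuotientAddGroup.btw_coe_iff]
  generalize coord r x = u at *
  generalize coord r y = v at *
  generalize coord r z = w at *
  have h1 : toIcoMod (Fact.out : (0 : ℝ) < 1) w v = if w ≤ v then v else v + 1 := by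
    split_ifs with h
    · exact (toIcoMod_eq_iff _).2 ⟨⟨h, by linarith⟩, 0, by simp⟩
    · exact (toIcoMod_eq_iff _).2 ⟨⟨by linarith, by linarith⟩, -1, by simp⟩
  have h2 : toIocMod (Fact.out : (0 : ℝ) < 1) w u = if w < u then u else u + 1 := by
    split_ifs with h
    · exact (toIocMod_eq_iff _).2 ⟨⟨h, by linarith⟩, 0, by simp⟩
    · exact (toIocMod_eq_iff _).2 ⟨⟨by linarith, by linarith⟩, -1, by simp⟩
  rw [h1, h2]
  split_ifs <;> grind

lemma exists_sbtw {a b : S1} (h : a ≠ b) : ∃ z, sbtw a z b := by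
  obtain ⟨ha1, ha2⟩ := coord_mem 0 a
  obtain ⟨hb1, hb2⟩ := coord_mem 0 b
  rcases lt_trichotomy (coord 0 a) (coord 0 b) with h1 | h1 | h1
  · refine ⟨(((coord 0 a + coord 0 b) / 2 : ℝ) : S1), ?_⟩
    rw [sbtw_coord 0, coord_coe (r := 0) (u := (coord 0 a + coord 0 b) / 2) (by linarith)
      (by linarith)]
    left; constructor <;> linarith
  · exact absurd (coord_inj h1) h
  · refine ⟨(((coord 0 a + 1) / 2 : ℝ) : S1), ?_⟩
    rw [sbtw_coord 0, coord_coe (r := 0) (u := (coord 0 a + 1) / 2) (by linarith)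
      (by linarith)]
    right; right; constructor <;> linarith

/-! ### Good intervals -/

lemma GoodInt.mem_carrier {I : GoodInt} {x : S1} : x ∈ I.carrier ↔ sbtw I.a x I.b := Iff.rfl

@[simp] lemma GoodInt.dual_a (I : GoodInt) : I.dual.a = I.b := rfl
@[simp] lemma GoodInt.dual_b (I : GoodInt) : I.dual.b = I.a := rfl
@[simp] lemma GoodInt.dual_dual (I : GoodInt) : I.dual.dual = I := rfl

lemma GoodInt.nonempty (I : GoodInt) : I.carrier.Nonempty := exists_sbtw I.ne

lemma GoodInt.mem_dual {I : GoodInt} {x : S1} :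
    x ∈ I.dual.carrier ↔ x ∉ I.carrier ∧ x ≠ I.a ∧ x ≠ I.b := by
  have h := I.ne
  simp only [GoodInt.mem_carrier, GoodInt.dual_a, GoodInt.dual_b, sbtw_coord 0]
  have h1 : x = I.a ↔ coord 0 x = coord 0 I.a := ⟨fun h => by rw [h], coord_inj⟩
  have h2 : x = I.b ↔ coord 0 x = coord 0 I.b := ⟨fun h => by rw [h], coord_inj⟩
  have h3 : ¬ coord 0 I.a = coord 0 I.b := fun h' => h (coord_inj h')
  simp only [ne_eq, h1, h2]
  grind

lemma GoodInt.disjoint_dual (I : GoodInt) : Disjoint I.carrier I.dual.carrier :=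
  Set.disjoint_left.2 fun _ h h' => (GoodInt.mem_dual.1 h').1 h

/-- Intervals are open: an endpoint of `I` cannot lie in an interval disjoint from `I`. -/
lemma GoodInt.left_not_mem {I J : GoodInt} (h : Disjoint I.carrier J.carrier) :
    I.a ∉ J.carrier := by
  intro ha
  by_cases hb : I.b ∈ J.carrier ∧ sbtw I.a I.b J.b
  · obtain ⟨z, hz⟩ := exists_sbtw I.ne
    refine Set.disjoint_left.1 h (show z ∈ I.carrier from hz) ?_
    obtain ⟨-, hb⟩ := hb
    simp only [GoodInt.mem_carrier, sbtw_coord 0] at *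
    grind
  · have hne : I.a ≠ J.b := fun h' => by
      rw [GoodInt.mem_carrier, h', sbtw_coord 0] at ha; grind
    obtain ⟨z, hz⟩ := exists_sbtw hne
    have h3 : ¬ coord 0 I.a = coord 0 I.b := fun h' => I.ne (coord_inj h')
    have h4 : I.b = J.b ∨ coord 0 I.b ≠ coord 0 J.b := by
      by_cases h : coord 0 I.b = coord 0 J.b
      · exact Or.inl (coord_inj h)
      · exact Or.inr h
    refine Set.disjoint_left.1 h (show z ∈ I.carrier from ?_) ?_ <;>
    · simp only [GoodInt.mem_carrier, sbtw_coord 0] at *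
      grind

lemma GoodInt.right_not_mem {I J : GoodInt} (h : Disjoint I.carrier J.carrier) :
    I.b ∉ J.carrier := by
  intro hb
  by_cases ha : sbtw J.a I.a I.b
  · obtain ⟨z, hz⟩ := exists_sbtw I.ne
    refine Set.disjoint_left.1 h (show z ∈ I.carrier from hz) ?_
    simp only [GoodInt.mem_carrier, sbtw_coord 0] at *
    grind
  · have hne : J.a ≠ I.b := fun h' => by
      rw [GoodInt.mem_carrier, h', sbtw_coord 0] at hb; grind
    obtain ⟨z, hz⟩ := exists_sbtw hne
    have h3 : ¬ coord 0 I.a = coord 0 I.b := fun h' => I.ne (coord_inj h')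
    have h4 : I.a = J.a ∨ coord 0 I.a ≠ coord 0 J.a := by
      by_cases h : coord 0 I.a = coord 0 J.a
      · exact Or.inl (coord_inj h)
      · exact Or.inr h
    refine Set.disjoint_left.1 h (show z ∈ I.carrier from ?_) ?_ <;>
    · simp only [GoodInt.mem_carrier, sbtw_coord 0] at *
      grind

lemma GoodInt.subset_dual_iff {I J : GoodInt} :
    I.carrier ⊆ J.dual.carrier ↔ Disjoint I.carrier J.carrier := by
  refine ⟨fun h => J.disjoint_dual.symm.mono_left h, fun h x hx => GoodInt.mem_dual.2
    ⟨Set.disjoint_left.1 h hx, ?_, ?_⟩⟩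
  · rintro rfl; exact GoodInt.left_not_mem h.symm hx
  · rintro rfl; exact GoodInt.right_not_mem h.symm hx

lemma GoodInt.subset_iff_disjoint_dual {I J : GoodInt} :
    I.carrier ⊆ J.carrier ↔ Disjoint I.carrier J.dual.carrier := by
  rw [← GoodInt.subset_dual_iff, GoodInt.dual_dual]

lemma GoodInt.dual_subset_dual {I J : GoodInt} :
    J.dual.carrier ⊆ I.dual.carrier ↔ I.carrier ⊆ J.carrier := by
  rw [GoodInt.subset_dual_iff, GoodInt.subset_iff_disjoint_dual, disjoint_comm]

lemma GoodInt.carrier_inj {I J : GoodInt} (h : I.carrier = J.carrier) : I = J := by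
  have key : ∀ {I J : GoodInt}, I.carrier = J.carrier → I.a = J.a ∧ I.b = J.b := by
    intro I J h
    have hd : I.dual.carrier = J.dual.carrier :=
      (GoodInt.dual_subset_dual.2 h.ge).antisymm (GoodInt.dual_subset_dual.2 h.le)
    -- both endpoints of `I` lie outside `J ∪ J*`, hence in `{J.a, J.b}`
    have ha1 : I.a ∉ J.carrier := by
      rw [← h]; intro h'; rw [GoodInt.mem_carrier, sbtw_coord 0] at h'; grind
    have ha2 : I.a ∉ J.dual.carrier := by
      rw [← hd]; intro h'; rw [GoodInt.mem_carrier, GoodInt.dual_b, sbtw_coord 0] at h'; grind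
    have hb1 : I.b ∉ J.carrier := by
      rw [← h]; intro h'; rw [GoodInt.mem_carrier, sbtw_coord 0] at h'; grind
    have hb2 : I.b ∉ J.dual.carrier := by
      rw [← hd]; intro h'; rw [GoodInt.mem_carrier, GoodInt.dual_a, sbtw_coord 0] at h'; grind
    rw [GoodInt.mem_dual] at ha2 hb2
    have hIne := I.ne
    by_cases hc : I.a = J.a
    · exact ⟨hc, by grind⟩
    · have h1 : I.a = J.b := by grind
      have h2 : I.b = J.a := by grind
      have h3 : J = I.dual := by cases I; cases J; simp_all [GoodInt.dual]
      obtain ⟨z, hz⟩ := I.nonempty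
      exact absurd (h3 ▸ h ▸ hz) (Set.disjoint_left.1 I.disjoint_dual hz)
  obtain ⟨h1, h2⟩ := key h
  cases I; cases J; simp_all

/-- In a coordinate based at a point of `I`, the right endpoint comes first. -/
lemma GoodInt.mem_coord {I : GoodInt} {r : ℝ} (hr : (r : S1) ∈ I.carrier) :
    r < coord r I.b ∧ coord r I.b < coord r I.a ∧
    ∀ x, x ∈ I.carrier ↔ coord r x < coord r I.b ∨ coord r I.a < coord r x := by
  have h0 : coord r (r : S1) = r := coord_coe le_rfl (by linarith)
  obtain ⟨ha1, ha2⟩ := coord_mem r I.a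
  obtain ⟨hb1, hb2⟩ := coord_mem r I.b
  simp only [GoodInt.mem_carrier, sbtw_coord r] at *
  rw [h0] at hr
  refine ⟨by grind, by grind, fun x => ?_⟩
  obtain ⟨hx1, hx2⟩ := coord_mem r x
  grind

/-! ### Finite groups acting on a lamination system -/

/-- Permutations of the circle act on good intervals through their endpoints. For an order
preserving permutation this is the action on carriers, see `FinAct.mem_smul`. -/
instance : MulAction (Equiv.Perm S1) GoodInt where
  smul h I := ⟨h I.a, h I.b, fun e => I.ne (h.injective e)⟩
  one_smul _ := rfl
  mul_smul _ _ _ := rfl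

@[simp] lemma smul_a (h : Equiv.Perm S1) (I : GoodInt) : (h • I).a = h I.a := rfl
@[simp] lemma smul_b (h : Equiv.Perm S1) (I : GoodInt) : (h • I).b = h I.b := rfl
lemma smul_dual (h : Equiv.Perm S1) (I : GoodInt) : (h • I).dual = h • I.dual := rfl

/-- A commutative group `H` of permutations of finite order preserving the circular order and
the lamination system `L`. -/
structure FinAct (L : LamSys) (H : Subgroup (Equiv.Perm S1)) : Prop where
  pos : ∀ h ∈ H, ∀ x y z : S1, sbtw x y z → sbtw (h x) (h y) (h z)
  mem : ∀ h ∈ H, ∀ I ∈ L.mem, h • I ∈ L.mem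
  fin : ∀ h ∈ H, IsOfFinOrder h
  comm : ∀ h ∈ H, ∀ k ∈ H, h * k = k * h

namespace FinAct

variable {L : LamSys} {H : Subgroup (Equiv.Perm S1)}

lemma mem_smul (A : FinAct L H) {h : Equiv.Perm S1} (hh : h ∈ H) {I : GoodInt} {x : S1} :
    x ∈ (h • I).carrier ↔ h⁻¹ x ∈ I.carrier := by
  constructor
  · intro hx
    simpa [GoodInt.mem_carrier] using A.pos _ (H.inv_mem hh) _ _ _ hx
  · intro hx
    simpa [GoodInt.mem_carrier] using A.pos _ hh _ _ _ hx

lemma carrier_smul (A : FinAct L H) {h : Equiv.Perm S1} (hh : h ∈ H) (I : GoodInt) :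
    (h • I).carrier = h '' I.carrier := by
  ext x
  rw [A.mem_smul hh, Equiv.image_eq_preimage_symm]
  rfl

lemma smul_subset_smul (A : FinAct L H) {h : Equiv.Perm S1} (hh : h ∈ H) {I J : GoodInt} :
    (h • I).carrier ⊆ (h • J).carrier ↔ I.carrier ⊆ J.carrier := by
  rw [A.carrier_smul hh, A.carrier_smul hh, Set.image_subset_image_iff h.injective]

lemma smul_disjoint_smul (A : FinAct L H) {h : Equiv.Perm S1} (hh : h ∈ H) {I J : GoodInt} :
    Disjoint (h • I).carrier (h • J).carrier ↔ Disjoint I.carrier J.carrier := by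
  rw [A.carrier_smul hh, A.carrier_smul hh, Set.disjoint_image_iff h.injective]

/-- The action on the circle is free: cutting the circle at a fixed point yields a linear
order, and an automorphism of finite order of a linear order is trivial. -/
lemma eq_one_of_fixed (A : FinAct L H) {h : Equiv.Perm S1} (hh : h ∈ H) {x : S1}
    (hx : h x = x) : h = 1 := by
  obtain ⟨n, hn, hn1⟩ := (isOfFinOrder_iff_pow_eq_one).1 (A.fin h hh)
  -- a point moved forward stays strictly ahead of its starting point forever
  have key : ∀ k ∈ H, k x = x → k ^ n = 1 → ∀ y, ¬ sbtw x y (k y) := by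
    intro k hk hkx hkn y hy
    have step : ∀ m : ℕ, sbtw x y ((k ^ (m + 1)) y) := by
      intro m
      induction m with
      | zero => simpa using hy
      | succ m ih =>
        have h1 := A.pos k hk _ _ _ ih
        rw [hkx, ← Equiv.Perm.mul_apply, ← pow_succ'] at h1
        simp only [sbtw_coord 0] at *
        grind
    have h2 := step (n - 1)
    rw [Nat.sub_add_cancel hn, hkn, Equiv.Perm.one_apply, sbtw_coord 0] at h2
    grind
  have hix : h⁻¹ x = x := by rw [Equiv.Perm.inv_eq_iff_eq, hx]
  ext1 y
  by_contra hne
  rw [Equiv.Perm.one_apply] at hne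
  have h1 := key h hh hx hn1 y
  have h2 := key h⁻¹ (H.inv_mem hh) hix (by rw [inv_pow, hn1, inv_one]) (h y)
  rw [show h⁻¹ (h y) = y from h.symm_apply_apply y] at h2
  have e1 : coord 0 (h y) ≠ coord 0 y := fun e => hne (coord_inj e)
  have e2 : coord 0 x ≠ coord 0 y := fun e => hne (by rw [← coord_inj e, hx])
  have e3 : coord 0 x ≠ coord 0 (h y) := fun e => e2 (by
    have := coord_inj e
    rw [← hx] at this
    rw [h.injective this])
  simp only [sbtw_coord 0] at h1 h2
  grind

lemma eq_one_of_smul_eq (A : FinAct L H) {h : Equiv.Perm S1} (hh : h ∈ H) {I : GoodInt}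
    (hI : h • I = I) : h = 1 :=
  A.eq_one_of_fixed hh (congrArg GoodInt.a hI)

/-- An element of finite order cannot map an interval properly into another: the inclusions
`I ⊆ h I ⊆ h² I ⊆ …` close up. -/
lemma eq_one_of_subset_smul (A : FinAct L H) {h : Equiv.Perm S1} (hh : h ∈ H) {I : GoodInt}
    (hI : I.carrier ⊆ (h • I).carrier) : h = 1 := by
  obtain ⟨n, hn, hn1⟩ := (isOfFinOrder_iff_pow_eq_one).1 (A.fin h hh)
  have step : ∀ m : ℕ, I.carrier ⊆ (h ^ m • I).carrier := by
    intro m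
    induction m with
    | zero => simp
    | succ m ih =>
      rw [pow_succ', mul_smul]
      exact hI.trans ((A.smul_subset_smul hh).2 ih)
  have h2 := (A.smul_subset_smul hh).2 (step (n - 1))
  rw [← mul_smul, ← pow_succ', Nat.sub_add_cancel hn, hn1, one_smul] at h2
  exact A.eq_one_of_smul_eq hh (GoodInt.carrier_inj (h2.antisymm hI))

/-- The elements of `L` that are disjoint from all their nontrivial translates. -/
def wandering (L : LamSys) (H : Subgroup (Equiv.Perm S1)) : Set GoodInt :=
  {J | J ∈ L.mem ∧ ∀ h ∈ H, h ≠ 1 → Disjoint J.carrier (h • J).carrier}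

/-- Every leaf has a wandering side. If `I ∩ k I` and `I* ∩ h I*` are both nonempty, then
unlinkedness gives `h I ⊆ I* ⊆ k I`, and finite order forces `I* = k I`, contradicting
`I ∩ k I ≠ ∅`. -/
lemma wandering_or_dual (A : FinAct L H) {I : GoodInt} (hI : I ∈ L.mem) :
    I ∈ wandering L H ∨ I.dual ∈ wandering L H := by
  have dich : ∀ h ∈ H, h ≠ 1 → Disjoint I.carrier (h • I).carrier ∨
      I.dual.carrier ⊆ (h • I).carrier := by
    intro h hh h1
    rcases L.unlinked I hI (h • I) (A.mem h hh I hI) with hs | hs | hs | hs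
    · exact absurd (A.eq_one_of_subset_smul hh hs) h1
    · exact Or.inr hs
    · exact Or.inl (GoodInt.subset_dual_iff.1 hs)
    · rw [smul_dual] at hs
      exact absurd (A.eq_one_of_subset_smul hh hs) h1
  by_contra! hcon
  obtain ⟨c1, c2⟩ := hcon
  have ⟨k, hk, hk1, hk2⟩ : ∃ k ∈ H, k ≠ 1 ∧ ¬ Disjoint I.carrier (k • I).carrier := by
    by_contra! hc; exact c1 ⟨hI, hc⟩
  have ⟨h, hh, hh1, hh2⟩ : ∃ k ∈ H, k ≠ 1 ∧ ¬ Disjoint I.dual.carrier (k • I.dual).carrier := by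
    by_contra! hc; exact c2 ⟨L.dual_mem I hI, hc⟩
  have hkI := (dich k hk hk1).resolve_left hk2
  have hhI : (h • I).carrier ⊆ I.dual.carrier := by
    rcases dich h hh hh1 with hd | hd
    · exact GoodInt.subset_dual_iff.2 hd.symm
    · refine absurd ?_ hh2
      rw [← smul_dual, ← GoodInt.subset_dual_iff]
      exact hd
  have hs : I.carrier ⊆ ((h⁻¹ * k) • I).carrier := by
    rw [← A.smul_subset_smul hh, ← mul_smul, mul_inv_cancel_left]
    exact hhI.trans hkI
  have he := A.eq_one_of_subset_smul (H.mul_mem (H.inv_mem hh) hk) hs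
  have hkh : h = k := by rwa [inv_mul_eq_one] at he
  subst hkh
  exact hk2 (GoodInt.subset_dual_iff.1 ((hhI).trans le_rfl)).symm

/-- Wandering elements that meet are nested, so long as `H` is nontrivial: if `J* ⊆ J'`, then
`h J ⊆ J* ⊆ J'`, hence `J` lies in a translate of `J'`, which is disjoint from `J'`. -/
lemma wandering_nested (A : FinAct L H) {h : Equiv.Perm S1} (hh : h ∈ H) (h1 : h ≠ 1)
    {J J' : GoodInt} (hJ : J ∈ wandering L H) (hJ' : J' ∈ wandering L H)
    (hm : ¬ Disjoint J.carrier J'.carrier) :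
    J.carrier ⊆ J'.carrier ∨ J'.carrier ⊆ J.carrier := by
  rcases L.unlinked J hJ.1 J' hJ'.1 with hs | hs | hs | hs
  · exact Or.inl hs
  · exfalso
    have h2 : (h • J).carrier ⊆ J'.carrier :=
      (GoodInt.subset_dual_iff.2 (hJ.2 h hh h1).symm).trans hs
    have h3 : J.carrier ⊆ (h⁻¹ • J').carrier := by
      rw [← A.smul_subset_smul hh, smul_inv_smul]
      exact h2
    exact hm ((hJ'.2 h⁻¹ (H.inv_mem hh) (inv_ne_one.2 h1)).mono_right h3).symm
  · exact absurd (GoodInt.subset_dual_iff.1 hs) hm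
  · exact Or.inr (GoodInt.dual_subset_dual.1 hs)

lemma smul_wandering (A : FinAct L H) {h : Equiv.Perm S1} (hh : h ∈ H) {J : GoodInt}
    (hJ : J ∈ wandering L H) : h • J ∈ wandering L H := by
  refine ⟨A.mem h hh J hJ.1, fun k hk k1 => ?_⟩
  rw [← mul_smul, ← A.comm h hh k hk, mul_smul, A.smul_disjoint_smul hh]
  exact hJ.2 k hk k1

/-- The wandering elements that are maximal with respect to inclusion. -/
def maxWandering (L : LamSys) (H : Subgroup (Equiv.Perm S1)) : Set GoodInt :=
  {J | J ∈ wandering L H ∧ ∀ J' ∈ wandering L H, J.carrier ⊆ J'.carrier →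
    J'.carrier ⊆ J.carrier}

/-- The wandering elements containing `J₀` form a chain of arcs; they are cofinally exhausted by
an ascending sequence, whose union is a good interval because it misses the translate `h J₀`. -/
lemma exists_max (A : FinAct L H) {h : Equiv.Perm S1} (hh : h ∈ H) (h1 : h ≠ 1)
    {J₀ : GoodInt} (hJ₀ : J₀ ∈ wandering L H) :
    ∃ J ∈ maxWandering L H, J₀.carrier ⊆ J.carrier := by
  obtain ⟨z, hz⟩ := J₀.nonempty
  obtain ⟨r, rfl⟩ : ∃ r : ℝ, (r : S1) = z := ⟨coord 0 z, coe_coord 0 z⟩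
  let C : Set GoodInt := {J | J ∈ wandering L H ∧ J₀.carrier ⊆ J.carrier}
  have hC₀ : J₀ ∈ C := ⟨hJ₀, Set.Subset.rfl⟩
  have hco : ∀ J ∈ C, r < coord r J.b ∧ coord r J.b < coord r J.a ∧
      ∀ x, x ∈ J.carrier ↔ coord r x < coord r J.b ∨ coord r J.a < coord r x :=
    fun J hJ => GoodInt.mem_coord (hJ.2 hz)
  have htot : ∀ J ∈ C, ∀ J' ∈ C, J.carrier ⊆ J'.carrier ∨ J'.carrier ⊆ J.carrier :=
    fun J hJ J' hJ' => A.wandering_nested hh h1 hJ.1 hJ'.1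
      (Set.not_disjoint_iff.2 ⟨_, hJ.2 hz, hJ'.2 hz⟩)
  -- inclusion of arcs in `C` read off on endpoints
  have hmono : ∀ J ∈ C, ∀ J' ∈ C, J.carrier ⊆ J'.carrier →
      coord r J.b ≤ coord r J'.b ∧ coord r J'.a ≤ coord r J.a := by
    intro J hJ J' hJ' hs
    obtain ⟨-, -, hJ3⟩ := hco J hJ
    obtain ⟨-, hJ2', hJ3'⟩ := hco J' hJ'
    have e1 : J'.a ∉ J.carrier := fun hx => by
      have := (hJ3' _).1 (hs hx); grind
    have e2 : J'.b ∉ J.carrier := fun hx => by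
      have := (hJ3' _).1 (hs hx); grind
    rw [hJ3, not_or, not_lt, not_lt] at e1 e2
    exact ⟨e2.1, e1.2⟩
  -- every element of `C` avoids the points of `h J₀`
  have hout : ∀ y ∈ (h • J₀).carrier, ∀ J ∈ C, coord r J.b ≤ coord r y ∧
      coord r y ≤ coord r J.a := by
    intro y hy J hJ
    have h2 : y ∉ J.carrier :=
      Set.disjoint_right.1 (hJ.1.2 h hh h1) ((A.smul_subset_smul hh).2 hJ.2 hy)
    rwa [(hco J hJ).2.2, not_or, not_lt, not_lt] at h2
  obtain ⟨y, hy⟩ := (h • J₀).nonempty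
  obtain ⟨y', hy'⟩ : ∃ y', sbtw (h • J₀).a y' y := exists_sbtw fun e => by
    rw [GoodInt.mem_carrier, e, sbtw_coord 0] at hy; grind
  have hyy : coord r y' ≠ coord r y := fun e => by
    rw [sbtw_coord r] at hy'; grind
  have hy'2 : y' ∈ (h • J₀).carrier := by
    rw [GoodInt.mem_carrier] at *
    simp only [sbtw_coord 0] at *
    grind
  let SA : Set ℝ := (fun J => coord r J.a) '' C
  let SB : Set ℝ := (fun J => coord r J.b) '' C
  have hSA : SA.Nonempty := ⟨_, J₀, hC₀, rfl⟩
  have hSB : SB.Nonempty := ⟨_, J₀, hC₀, rfl⟩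
  have hSAb : BddBelow SA := ⟨r, by rintro _ ⟨J, -, rfl⟩; exact (coord_mem r J.a).1⟩
  have hSBb : BddAbove SB := ⟨r + 1, by rintro _ ⟨J, -, rfl⟩; exact (coord_mem r J.b).2.le⟩
  obtain ⟨α, hα⟩ : ∃ α, α = sInf SA := ⟨_, rfl⟩
  obtain ⟨β, hβ⟩ : ∃ β, β = sSup SB := ⟨_, rfl⟩
  have hαle : ∀ J ∈ C, α ≤ coord r J.a := fun J hJ => hα ▸ csInf_le hSAb ⟨J, hJ, rfl⟩
  have hβge : ∀ J ∈ C, coord r J.b ≤ β := fun J hJ => hβ ▸ le_csSup hSBb ⟨J, hJ, rfl⟩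
  have hout2 : ∀ y ∈ (h • J₀).carrier, β ≤ coord r y ∧ coord r y ≤ α := by
    intro y hy
    constructor
    · rw [hβ]
      exact csSup_le hSB (by rintro _ ⟨J, hJ, rfl⟩; exact (hout y hy J hJ).1)
    · rw [hα]
      exact le_csInf hSA (by rintro _ ⟨J, hJ, rfl⟩; exact (hout y hy J hJ).2)
  -- the interval `h J₀` has more than one point, so the limiting endpoints are distinct
  have hβα : β < α := by
    have := hout2 y hy
    have := hout2 y' hy'2
    grind
  have hrβ : r < β := (hco J₀ hC₀).1.trans_le (hβge J₀ hC₀)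
  have hα1 : α < r + 1 := (hαle J₀ hC₀).trans_lt (coord_mem r J₀.a).2
  have hcα : coord r (α : S1) = α := coord_coe (by linarith) hα1
  have hcβ : coord r (β : S1) = β := coord_coe (by linarith) (by linarith)
  have hcr : coord r (r : S1) = r := coord_coe le_rfl (by linarith)
  let M : GoodInt := ⟨(α : S1), (β : S1), fun e => by
    have := congrArg (coord r) e
    rw [hcα, hcβ] at this
    linarith⟩
  have hMr : (r : S1) ∈ M.carrier := by
    change sbtw (α : S1) (r : S1) (β : S1)
    rw [sbtw_coord r, hcα, hcβ, hcr]
    exact Or.inr (Or.inl ⟨hrβ, hβα⟩)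
  have hM : ∀ x, x ∈ M.carrier ↔ coord r x < β ∨ α < coord r x := by
    intro x
    have := (GoodInt.mem_coord hMr).2.2 x
    rwa [show coord r M.a = α from hcα, show coord r M.b = β from hcβ] at this
  have happrox : ∀ n : ℕ, ∃ J ∈ C, coord r J.a < α + 1 / ((n : ℝ) + 1) ∧
      β - 1 / ((n : ℝ) + 1) < coord r J.b := by
    intro n
    have hpos : (0 : ℝ) < 1 / ((n : ℝ) + 1) := Nat.one_div_pos_of_nat
    obtain ⟨_, ⟨J, hJ, rfl⟩, hJ2⟩ := exists_lt_of_csInf_lt hSA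
      (show sInf SA < α + 1 / ((n : ℝ) + 1) by rw [← hα]; linarith)
    obtain ⟨_, ⟨K, hK, rfl⟩, hK2⟩ := exists_lt_of_lt_csSup hSB
      (show β - 1 / ((n : ℝ) + 1) < sSup SB by rw [← hβ]; linarith)
    rcases htot J hJ K hK with hs | hs
    · exact ⟨K, hK, (hmono J hJ K hK hs).2.trans_lt hJ2, hK2⟩
    · exact ⟨J, hJ, hJ2, hK2.trans_le (hmono K hK J hJ hs).1⟩
  choose f hfC hfa hfb using happrox
  have hdir : Directed (· ≤ ·) (fun n => (f n).carrier) := by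
    intro m n
    rcases htot _ (hfC m) _ (hfC n) with hs | hs
    · exact ⟨n, hs, le_rfl⟩
    · exact ⟨m, le_rfl, hs⟩
  obtain ⟨c, hcC, hcmono, hcf⟩ : ∃ c : ℕ → GoodInt, (∀ n, c n ∈ C) ∧
      Monotone (fun n => (c n).carrier) ∧ ∀ n, (f n).carrier ⊆ (c (n + 1)).carrier :=
    ⟨fun n => f (hdir.sequence _ n), fun n => hfC _, hdir.sequence_mono,
      fun n => hdir.rel_sequence n⟩
  have hMU : M.carrier = ⋃ n, (c n).carrier := by
    ext x
    rw [hM, Set.mem_iUnion]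
    constructor
    · rintro (hx | hx)
      · obtain ⟨n, hn⟩ := exists_nat_one_div_lt (sub_pos.2 hx)
        refine ⟨n + 1, hcf n (((hco _ (hfC n)).2.2 x).2 (Or.inl ?_))⟩
        linarith [hfb n]
      · obtain ⟨n, hn⟩ := exists_nat_one_div_lt (sub_pos.2 hx)
        refine ⟨n + 1, hcf n (((hco _ (hfC n)).2.2 x).2 (Or.inr ?_))⟩
        linarith [hfa n]
    · rintro ⟨n, hn⟩
      rcases ((hco _ (hcC n)).2.2 x).1 hn with hx | hx
      · exact Or.inl (hx.trans_le (hβge _ (hcC n)))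
      · exact Or.inr ((hαle _ (hcC n)).trans_lt hx)
  have hJ₀M : J₀.carrier ⊆ M.carrier := by
    rw [hMU]
    exact (hcC 0).2.trans (Set.subset_iUnion (fun n => (c n).carrier) 0)
  refine ⟨M, ⟨⟨L.chain_closed c (fun n => (hcC n).1.1) (fun n => hcmono n.le_succ) M hMU, ?_⟩,
    ?_⟩, hJ₀M⟩
  · intro k hk k1
    rw [Set.disjoint_left]
    intro x hx hx'
    rw [A.mem_smul hk, hMU, Set.mem_iUnion] at hx'
    rw [hMU, Set.mem_iUnion] at hx
    obtain ⟨m, hm⟩ := hx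
    obtain ⟨n, hn⟩ := hx'
    have hm' := hcmono (le_max_left m n) hm
    have hn' := hcmono (le_max_right m n) hn
    exact Set.disjoint_left.1 ((hcC (max m n)).1.2 k hk k1) hm' ((A.mem_smul hk).2 hn')
  · intro J' hJ' hs x hx
    have hJC : J' ∈ C := ⟨hJ', hJ₀M.trans hs⟩
    rw [hM]
    rcases ((hco _ hJC).2.2 x).1 hx with hx | hx
    · exact Or.inl (hx.trans_le (hβge _ hJC))
    · exact Or.inr ((hαle _ hJC).trans_lt hx)

lemma smul_maxWandering (A : FinAct L H) {h : Equiv.Perm S1} (hh : h ∈ H) {J : GoodInt}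
    (hJ : J ∈ maxWandering L H) : h • J ∈ maxWandering L H := by
  refine ⟨A.smul_wandering hh hJ.1, fun J' hJ' hs => ?_⟩
  rw [← A.smul_subset_smul (H.inv_mem hh), inv_smul_smul] at hs ⊢
  exact hJ.2 _ (A.smul_wandering (H.inv_mem hh) hJ') hs

lemma isGap_maxWandering (A : FinAct L H) {h : Equiv.Perm S1} (hh : h ∈ H) (h1 : h ≠ 1) :
    L.IsGap (maxWandering L H) := by
  refine ⟨fun J hJ => hJ.1.1, fun I hI J hJ hne => ?_, fun I hI => ?_⟩
  · by_contra hm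
    rcases A.wandering_nested hh h1 hI.1 hJ.1 hm with hs | hs
    · exact hne (GoodInt.carrier_inj (hs.antisymm (hI.2 J hJ.1 hs)))
    · exact hne (GoodInt.carrier_inj ((hJ.2 I hI.1 hs).antisymm hs))
  · rcases A.wandering_or_dual hI with hw | hw
    · obtain ⟨J, hJ, hs⟩ := A.exists_max hh h1 hw
      exact ⟨J, hJ, Or.inl hs⟩
    · obtain ⟨J, hJ, hs⟩ := A.exists_max hh h1 hw
      exact ⟨J, hJ, Or.inr hs⟩

lemma mapsGapOnto_maxWandering (A : FinAct L H) {h : Equiv.Perm S1} (hh : h ∈ H) :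
    MapsGapOnto h (maxWandering L H) := by
  refine ⟨fun I hI => ⟨h • I, A.smul_maxWandering hh hI, A.carrier_smul hh I⟩, fun J hJ =>
    ⟨h⁻¹ • J, A.smul_maxWandering (H.inv_mem hh) hJ, ?_⟩⟩
  rw [← A.carrier_smul hh, smul_inv_smul]

/-- A crown cannot be invariant under a free action: the pivot is the only vertex that is not an
endpoint of an element of the crown, so it would be fixed. -/
lemma not_isCrown (A : FinAct L H) {h : Equiv.Perm S1} (hh : h ∈ H) (h1 : h ≠ 1) :
    ¬ IsCrown (maxWandering L H) := by
  rintro ⟨t, p, hpt, htt, hG, hv⟩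
  have hp : p ∈ gapVerts (maxWandering L H) := by rw [hv]; exact Or.inr rfl
  have hhp : h p ∈ gapVerts (maxWandering L H) := by
    intro hmem
    obtain ⟨J, hJ, hx⟩ := Set.mem_iUnion₂.1 hmem
    refine hp (Set.mem_iUnion₂.2 ⟨h⁻¹ • J, A.smul_maxWandering (H.inv_mem hh) hJ, ?_⟩)
    rw [A.mem_smul (H.inv_mem hh), inv_inv]
    exact hx
  rw [hv] at hhp
  rcases hhp with ⟨k, hk⟩ | hfix
  · -- `h p = t k` is the left endpoint of an element `I`, so `p` is that of `h⁻¹ I`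
    have hI : (⟨t k, t (k + 1), htt k⟩ : GoodInt) ∈ maxWandering L H := by
      rw [hG]; exact ⟨k, rfl, rfl⟩
    have hI2 := A.smul_maxWandering (H.inv_mem hh) hI
    rw [hG] at hI2
    obtain ⟨j, hj, -⟩ := hI2
    refine hpt j ?_
    rw [← hj, smul_a]
    exact ((Equiv.Perm.inv_eq_iff_eq).2 hk).symm
  · exact h1 (A.eq_one_of_fixed hh hfix)

/-- The free action on the gap decomposes it into orbits that are copies of `H`. No finiteness is
needed, since `Nat.card` is multiplicative on products of arbitrary types. -/
lemma card_dvd_ncard (A : FinAct L H) : Nat.card H ∣ (maxWandering L H).ncard := by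
  let _ : MulAction H (maxWandering L H) :=
    { smul := fun h J => ⟨(h : Equiv.Perm S1) • (J : GoodInt), A.smul_maxWandering h.2 J.2⟩
      one_smul := fun _ => rfl
      mul_smul := fun _ _ _ => rfl }
  have hfree : ∀ J : maxWandering L H, MulAction.stabilizer H J = ⊥ := by
    intro J
    rw [eq_bot_iff]
    intro h hs
    rw [Subgroup.mem_bot]
    have e : h • J = J := hs
    exact Subtype.ext (A.eq_one_of_smul_eq h.2 (congrArg Subtype.val e))
  rw [← Nat.card_coe_set_eq, Nat.card_congr (MulAction.selfEquivOrbitsQuotientProd hfree),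
    Nat.card_prod]
  exact dvd_mul_left _ _

/-- The cyclic group generated by an elliptic automorphism. -/
lemma of_elliptic {g : Equiv.Perm S1} (hg : L.InAut g) (hell : IsOfFinOrder g) :
    FinAct L (Subgroup.zpowers g) := by
  have ind : ∀ P : Equiv.Perm S1 → Prop, P 1 → (∀ k, P k → P (g * k)) →
      ∀ h ∈ Subgroup.zpowers g, P h := by
    intro P h1 hs h hh
    rw [← hell.mem_powers_iff_mem_zpowers] at hh
    obtain ⟨n, rfl⟩ := hh
    change P (g ^ n)
    induction n with
    | zero => simpa using h1
    | succ n ih => rw [pow_succ']; exact hs _ ih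
  have hpos : ∀ h ∈ Subgroup.zpowers g, ∀ x y z : S1, sbtw x y z → sbtw (h x) (h y) (h z) :=
    ind _ (fun _ _ _ h => h) fun k hk x y z hs => hg.1.2.2 _ _ _ (hk x y z hs)
  have hg1 : ∀ I ∈ L.mem, g • I ∈ L.mem := by
    intro I hI
    obtain ⟨J, hJ, e⟩ := hg.2 I hI
    have e2 : J = g • I := by
      refine GoodInt.carrier_inj ?_
      rw [e]
      ext x
      rw [Equiv.image_eq_preimage_symm]
      constructor
      · intro hx
        have := hg.1.2.2 _ _ _ hx
        rwa [Equiv.apply_symm_apply] at this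
      · intro hx
        have := hpos g⁻¹ (Subgroup.inv_mem _ (Subgroup.mem_zpowers g)) _ _ _ hx
        simpa [GoodInt.mem_carrier] using this
    exact e2 ▸ hJ
  refine ⟨hpos, ind _ (fun I hI => by rwa [one_smul]) fun k hk I hI => ?_, ?_, ?_⟩
  · rw [mul_smul]; exact hg1 _ (hk I hI)
  · rintro h ⟨n, rfl⟩
    exact hell.zpow
  · rintro _ ⟨m, rfl⟩ _ ⟨n, rfl⟩
    exact ((Commute.refl g).zpow_zpow m n)

end FinAct

/-- an elliptic automorphism of a quite full lamination system
admitting a rainbow point preserves an ideal polygon, and its order divides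
the number of elements of that polygon. -/
theorem statement10 (L : LamSys) (hqf : L.QuiteFull)
    (hrb : ∃ p : S1, L.IsRainbowPt p)
    (g : Equiv.Perm S1) (hg : L.InAut g) (hell : Elliptic g) :
    ∃ G : Set GoodInt, L.IsGap G ∧ (gapVerts G).Finite ∧ MapsGapOnto g G ∧
      orderOf g ∣ G.ncard := by
  have A := FinAct.of_elliptic hg hell.2
  have hgm := Subgroup.mem_zpowers g
  have hgap := A.isGap_maxWandering hgm hell.1
  refine ⟨_, hgap, (hqf _ hgap).resolve_right (A.not_isCrown hgm hell.1),
    A.mapsGapOnto_maxWandering hgm, ?_⟩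
  rw [← Nat.card_zpowers]
  exact A.card_dvd_ncard

end Veering
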